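/- arXiv:1301.2677 — 3 statements merged into one kernel-verified Lean document; each statement's English description precedes it below -/
import Mathlib

section
/- Let m, n ≥ 1 and let (τ̄_{k,l}) be an m × n matrix with τ̄_{k,l} > 0 for all k, l and ∑_{k=1}^m ∑_{l=1}^n τ̄_{k,l} = 1. Then there exist vectors μ ∈ ℝ^m and λ ∈ ℝ^n such that μ_k + λ_l > 0 for all k, l, ∑_{l=1}^n τ̄_{k,l}/(μ_k + λ_l) = 1/m for every k, and ∑_{k=1}^m τ̄_{k,l}/(μ_k + λ_l) = 1/n for every l; consequently the matrix with entries r_{k,l} = τ̄_{k,l}/(μ_k + λ_l) belongs to the transportation polytope with row sums 1/m and column sums 1/n and has all entries positive. -/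
open Finset

open Filter Topology

/-! The multipliers come from the maximizer `r` of `∑ τ i j * log (r i j)` over the transportation
polytope. The exponential `∏ (r i j) ^ τ i j` of this objective extends continuously to the
boundary and vanishes there, so it attains its maximum on the compact polytope, at an entrywise
positive matrix. Stationarity at that interior point says that `τ i j / r i j` is orthogonal to
every matrix with zero row and column sums, hence is of the form `μ i + ν j`. -/

section Separation

variable {ι κ R : Type*} [Fintype ι] [Fintype κ] [Ring R]

theorem exists_add_eq_of_orthogonal_zero_margins {w : ι → κ → R}
    (hw : ∀ d : ι → κ → R, (∀ i, ∑ j, d i j = 0) → (∀ j, ∑ i, d i j = 0) →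
      ∑ i, ∑ j, w i j * d i j = 0) :
    ∃ (μ : ι → R) (ν : κ → R), ∀ i j, μ i + ν j = w i j := by
  classical
  rcases isEmpty_or_nonempty ι with _ | ⟨⟨i₀⟩⟩
  · exact ⟨0, 0, fun i => isEmptyElim i⟩
  rcases isEmpty_or_nonempty κ with _ | ⟨⟨j₀⟩⟩
  · exact ⟨0, 0, fun _ j => isEmptyElim j⟩
  refine ⟨fun i => w i j₀ - w i₀ j₀, fun j => w i₀ j, fun i j => ?_⟩
  -- Test against the elementary exchange along the rectangle with corners `(i, j)`, `(i₀, j₀)`.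
  let x : ι → R := Pi.single i 1 - Pi.single i₀ 1
  let y : κ → R := Pi.single j 1 - Pi.single j₀ 1
  have hx : ∑ i', x i' = 0 := by simp [x]
  have hy : ∑ j', y j' = 0 := by simp [y]
  have h_exchange := hw (fun i' j' => x i' * y j')
    (fun i' => by rw [← mul_sum, hy, mul_zero]) (fun j' => by rw [← sum_mul, hx, zero_mul])
  have h_corners : w i j - w i₀ j - (w i j₀ - w i₀ j₀) = 0 := by
    simpa [x, y, Pi.single_apply, sub_mul, mul_sub] using h_exchange
  exact (sub_eq_iff_eq_add.mp (sub_eq_zero.mp h_corners)).symm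

end Separation

section TransportPolytope

variable {ι κ : Type*} [Fintype ι] [Fintype κ]

/-- The transportation polytope: nonnegative matrices with row sums `a` and column sums `b`. -/
def transportPolytope (a : ι → ℝ) (b : κ → ℝ) : Set (ι → κ → ℝ) :=
  {r | (∀ i j, 0 ≤ r i j) ∧ (∀ i, ∑ j, r i j = a i) ∧ ∀ j, ∑ i, r i j = b j}

variable {a : ι → ℝ} {b : κ → ℝ} {r d : ι → κ → ℝ}

theorem isClosed_transportPolytope (a : ι → ℝ) (b : κ → ℝ) :
    IsClosed (transportPolytope a b) := by
  simp only [transportPolytope, Set.ofPred_and, Set.ofPred_forall]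
  refine .inter ?_ (.inter ?_ ?_)
  · exact isClosed_iInter fun i => isClosed_iInter fun j =>
      isClosed_le continuous_const (by fun_prop)
  · exact isClosed_iInter fun i => isClosed_eq (by fun_prop) continuous_const
  · exact isClosed_iInter fun j => isClosed_eq (by fun_prop) continuous_const

theorem transportPolytope_subset_Icc (a : ι → ℝ) (b : κ → ℝ) :
    transportPolytope a b ⊆ Set.Icc 0 (fun i _ => a i) := by
  rintro r ⟨hr, hrow, -⟩
  refine ⟨hr, fun i j => ?_⟩
  simp only [← hrow i]
  exact single_le_sum (fun j _ => hr i j) (mem_univ j)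

theorem isCompact_transportPolytope (a : ι → ℝ) (b : κ → ℝ) :
    IsCompact (transportPolytope a b) :=
  isCompact_Icc.of_isClosed_subset (isClosed_transportPolytope a b)
    (transportPolytope_subset_Icc a b)

theorem mul_div_sum_mem_transportPolytope (ha : ∀ i, 0 ≤ a i) (hb : ∀ j, 0 ≤ b j)
    (hab : ∑ i, a i = ∑ j, b j) :
    (fun i j => a i * b j / ∑ i', a i') ∈ transportPolytope a b := by
  refine ⟨fun i j => div_nonneg (mul_nonneg (ha i) (hb j)) (sum_nonneg fun i _ => ha i),
    fun i => ?_, fun j => ?_⟩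
  · rw [← sum_div, ← mul_sum, ← hab]
    refine mul_div_cancel_of_imp fun h => ?_
    exact (sum_eq_zero_iff_of_nonneg fun i _ => ha i).mp h i (mem_univ i)
  · rw [← sum_div, ← sum_mul, mul_comm, hab]
    refine mul_div_cancel_of_imp fun h => ?_
    exact (sum_eq_zero_iff_of_nonneg fun j _ => hb j).mp h j (mem_univ j)

theorem add_smul_mem_transportPolytope (hr : r ∈ transportPolytope a b)
    (hd_row : ∀ i, ∑ j, d i j = 0) (hd_col : ∀ j, ∑ i, d i j = 0) {t : ℝ}
    (ht : ∀ i j, 0 ≤ (r + t • d) i j) : r + t • d ∈ transportPolytope a b := by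
  refine ⟨ht, fun i => ?_, fun j => ?_⟩
  · simp [sum_add_distrib, ← mul_sum, hr.2.1, hd_row]
  · simp [sum_add_distrib, ← mul_sum, hr.2.2, hd_col]

end TransportPolytope

theorem eventually_add_smul_pos {ι κ : Type*} [Finite ι] [Finite κ] {r : ι → κ → ℝ}
    (hr : ∀ i j, 0 < r i j) (d : ι → κ → ℝ) :
    ∀ᶠ t in 𝓝 (0 : ℝ), ∀ i j, 0 < (r + t • d) i j := by
  simp only [eventually_all]
  intro i j
  have h_cont : Continuous fun t : ℝ => (r + t • d) i j := by
    simp only [Pi.add_apply, Pi.smul_apply]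
    fun_prop
  exact h_cont.continuousAt.eventually (lt_mem_nhds (by simpa using hr i j))

section Likelihood

variable {ι κ : Type*} [Fintype ι] [Fintype κ] {τ r : ι → κ → ℝ}

/-- The likelihood of the matrix `r` under the weights `τ`, i.e. the exponential of the objective
`∑ τ i j * log (r i j)`. Unlike that sum, in which `Real.log 0 = 0`, it is well behaved at matrices
with zero entries. -/
noncomputable def likelihood (τ r : ι → κ → ℝ) : ℝ :=
  ∏ i, ∏ j, r i j ^ τ i j

theorem continuous_likelihood (hτ : ∀ i j, 0 ≤ τ i j) : Continuous (likelihood τ) :=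
  continuous_finsetProd _ fun i _ => continuous_finsetProd _ fun j _ =>
    Continuous.rpow_const (by fun_prop) fun _ => Or.inr (hτ i j)

theorem likelihood_pos (τ : ι → κ → ℝ) (hr : ∀ i j, 0 < r i j) : 0 < likelihood τ r :=
  prod_pos fun i _ => prod_pos fun j _ => Real.rpow_pos_of_pos (hr i j) _

theorem likelihood_eq_zero_of_apply_eq_zero {i : ι} {j : κ} (hτ : τ i j ≠ 0) (hr : r i j = 0) :
    likelihood τ r = 0 :=
  prod_eq_zero (mem_univ i) <| prod_eq_zero (mem_univ j) <| by rw [hr, Real.zero_rpow hτ]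

theorem log_likelihood (τ : ι → κ → ℝ) (hr : ∀ i j, 0 < r i j) :
    Real.log (likelihood τ r) = ∑ i, ∑ j, τ i j * Real.log (r i j) := by
  have h_pos : ∀ i j, 0 < r i j ^ τ i j := fun i j => Real.rpow_pos_of_pos (hr i j) _
  rw [likelihood, Real.log_prod fun i _ => (prod_pos fun j _ => h_pos i j).ne']
  refine sum_congr rfl fun i _ => ?_
  rw [Real.log_prod fun j _ => (h_pos i j).ne']
  exact sum_congr rfl fun j _ => Real.log_rpow (hr i j) _

theorem hasDerivAt_log_likelihood_add_smul (τ : ι → κ → ℝ) (hr : ∀ i j, 0 < r i j)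
    (d : ι → κ → ℝ) :
    HasDerivAt (fun t : ℝ => Real.log (likelihood τ (r + t • d)))
      (∑ i, ∑ j, τ i j / r i j * d i j) 0 := by
  have h_sum : HasDerivAt (fun t : ℝ => ∑ i, ∑ j, τ i j * Real.log (r i j + t * d i j))
      (∑ i, ∑ j, τ i j / r i j * d i j) 0 := by
    refine .fun_sum fun i _ => .fun_sum fun j _ => ?_
    have h_line : HasDerivAt (fun t : ℝ => r i j + t * d i j) (d i j) 0 := by
      simpa using ((hasDerivAt_id (0 : ℝ)).mul_const (d i j)).const_add (r i j)
    have h_ne : r i j + 0 * d i j ≠ 0 := by simpa using (hr i j).ne'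
    exact ((h_line.log h_ne).const_mul (τ i j)).congr_deriv (by ring)
  refine h_sum.congr_of_eventuallyEq ?_
  filter_upwards [eventually_add_smul_pos hr d] with t ht
  exact log_likelihood τ ht

end Likelihood

section Maximizer

variable {ι κ : Type*} [Fintype ι] [Fintype κ] {τ r : ι → κ → ℝ} {a : ι → ℝ} {b : κ → ℝ}

theorem exists_pos_isMaxOn_likelihood (hτ : ∀ i j, 0 < τ i j) (ha : ∀ i, 0 < a i)
    (hb : ∀ j, 0 < b j) (hab : ∑ i, a i = ∑ j, b j) :
    ∃ r ∈ transportPolytope a b, (∀ i j, 0 < r i j) ∧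
      IsMaxOn (likelihood τ) (transportPolytope a b) r := by
  have h_mem := mul_div_sum_mem_transportPolytope (fun i => (ha i).le) (fun j => (hb j).le) hab
  obtain ⟨r, hr, h_max⟩ := (isCompact_transportPolytope a b).exists_isMaxOn ⟨_, h_mem⟩
    (continuous_likelihood fun i j => (hτ i j).le).continuousOn
  have h_pos : 0 < likelihood τ r := by
    refine (likelihood_pos τ fun i j => ?_).trans_le (h_max h_mem)
    exact div_pos (mul_pos (ha i) (hb j)) (sum_pos (fun i _ => ha i) ⟨i, mem_univ i⟩)
  refine ⟨r, hr, fun i j => (hr.1 i j).lt_of_ne' fun h_zero => ?_, h_max⟩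
  exact h_pos.ne' (likelihood_eq_zero_of_apply_eq_zero (hτ i j).ne' h_zero)

theorem sum_div_mul_eq_zero_of_isMaxOn_likelihood (hr : r ∈ transportPolytope a b)
    (hr_pos : ∀ i j, 0 < r i j) (h_max : IsMaxOn (likelihood τ) (transportPolytope a b) r)
    {d : ι → κ → ℝ} (hd_row : ∀ i, ∑ j, d i j = 0) (hd_col : ∀ j, ∑ i, d i j = 0) :
    ∑ i, ∑ j, τ i j / r i j * d i j = 0 := by
  refine IsLocalMax.hasDerivAt_eq_zero ?_ (hasDerivAt_log_likelihood_add_smul τ hr_pos d)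
  filter_upwards [eventually_add_smul_pos hr_pos d] with t ht
  have h_le : likelihood τ (r + t • d) ≤ likelihood τ r :=
    h_max (add_smul_mem_transportPolytope hr hd_row hd_col fun i j => (ht i j).le)
  simpa using Real.log_le_log (likelihood_pos τ ht) h_le

end Maximizer

theorem lagrange_multipliers_exist_general {ι κ : Type*} [Fintype ι] [Fintype κ]
    {τ : ι → κ → ℝ} {a : ι → ℝ} {b : κ → ℝ} (hτ : ∀ i j, 0 < τ i j) (ha : ∀ i, 0 < a i)
    (hb : ∀ j, 0 < b j) (hab : ∑ i, a i = ∑ j, b j) :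
    ∃ (μ : ι → ℝ) (ν : κ → ℝ),
      (∀ i j, 0 < μ i + ν j) ∧
      (∀ i, ∑ j, τ i j / (μ i + ν j) = a i) ∧
      (∀ j, ∑ i, τ i j / (μ i + ν j) = b j) ∧
      (∀ i j, 0 < τ i j / (μ i + ν j)) := by
  obtain ⟨r, hr, hr_pos, h_max⟩ := exists_pos_isMaxOn_likelihood hτ ha hb hab
  obtain ⟨μ, ν, h_add⟩ := exists_add_eq_of_orthogonal_zero_margins fun _ =>
    sum_div_mul_eq_zero_of_isMaxOn_likelihood hr hr_pos h_max
  have h_div : ∀ i j, τ i j / (μ i + ν j) = r i j := fun i j => by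
    rw [h_add, div_div_cancel₀ (hτ i j).ne']
  refine ⟨μ, ν, fun i j => ?_, fun i => ?_, fun j => ?_, fun i j => ?_⟩
  · rw [h_add]
    exact div_pos (hτ i j) (hr_pos i j)
  · simp only [h_div, hr.2.1]
  · simp only [h_div, hr.2.2]
  · rw [h_div]
    exact hr_pos i j

/-- Existence of Lagrange multiplier vectors `μ, λ` with `μ_k + λ_l > 0`,
`∑_l τ̄_{k,l}/(μ_k+λ_l) = 1/m` and `∑_k τ̄_{k,l}/(μ_k+λ_l) = 1/n`; consequently
`r_{k,l} = τ̄_{k,l}/(μ_k+λ_l)` is a strictly positive matrix in the transportation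
polytope with row sums `1/m` and column sums `1/n`. -/
theorem lagrange_multipliers_exist (m n : ℕ) (hm : 1 ≤ m) (hn : 1 ≤ n)
    (τ : Fin m → Fin n → ℝ) (hτ : ∀ k l, 0 < τ k l)
    (hsum : ∑ k : Fin m, ∑ l : Fin n, τ k l = 1) :
    ∃ (μ : Fin m → ℝ) (lam : Fin n → ℝ),
      (∀ k l, 0 < μ k + lam l) ∧
      (∀ k, ∑ l : Fin n, τ k l / (μ k + lam l) = 1 / (m : ℝ)) ∧
      (∀ l, ∑ k : Fin m, τ k l / (μ k + lam l) = 1 / (n : ℝ)) ∧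
      (∀ k l, 0 < τ k l / (μ k + lam l)) :=
  lagrange_multipliers_exist_general hτ (fun _ => by positivity) (fun _ => by positivity) <| by
    simp [Nat.one_le_iff_ne_zero.mp hm, Nat.one_le_iff_ne_zero.mp hn]
end

section
/- Let c = (c_{k,l}) be an m × n real matrix with all entries strictly positive, set c_{k+} = ∑_l c_{k,l}, c_{+l} = ∑_k c_{k,l}, c_{++} = ∑_{k,l} c_{k,l}, and define the m × n matrix D by D_{k,l} = c_{k,l}/√(c_{k+} c_{+l}). Then the largest singular value of D equals 1; equivalently, uᵀ D v ≤ ‖u‖‖v‖ for all u ∈ ℝ^m, v ∈ ℝ^n, and equality holds for the unit vectors u with u_k = √(c_{k+}/c_{++}) and v with v_l = √(c_{+l}/c_{++}); in particular D Dᵀ u = u for this u. -/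
open Finset

/-- The normalized matrix `D_{k,l} = c_{k,l}/√(c_{k+} c_{+l})`. -/
noncomputable def Dmat {m n : ℕ} (c : Fin m → Fin n → ℝ) (k : Fin m) (l : Fin n) : ℝ :=
  c k l / Real.sqrt ((∑ l' : Fin n, c k l') * (∑ k' : Fin m, c k' l))

/-- The unit vector `u_k = √(c_{k+}/c_{++})`. -/
noncomputable def uStar {m n : ℕ} (c : Fin m → Fin n → ℝ) (k : Fin m) : ℝ :=
  Real.sqrt ((∑ l' : Fin n, c k l') / (∑ k' : Fin m, ∑ l' : Fin n, c k' l'))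

/-- The unit vector `v_l = √(c_{+l}/c_{++})`. -/
noncomputable def vStar {m n : ℕ} (c : Fin m → Fin n → ℝ) (l : Fin n) : ℝ :=
  Real.sqrt ((∑ k' : Fin m, c k' l) / (∑ k' : Fin m, ∑ l' : Fin n, c k' l'))

/-!
The positive vectors `uStar c` and `vStar c` form a singular pair of the nonnegative matrix
`Dmat c` with singular value `1`: `D v = u` and `Dᵀ u = v`. By the Schur test, a positive singular
pair `(p, q)` of a nonnegative matrix `A` belongs to its largest singular value: split
`u_k A_{k,l} v_l` as `u_k √(A_{k,l} q_l / p_k) * v_l √(A_{k,l} p_k / q_l)` and use Cauchy-Schwarz.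
-/

section SchurTest

variable {ι κ R : Type*} [Fintype ι] [Fintype κ] [Field R] [LinearOrder R] [IsStrictOrderedRing R]

theorem sum_sum_mul_div_mul_sq_le {A : ι → κ → R} {p : ι → R} {q : κ → R} {a : R}
    (hp : ∀ k, 0 < p k) (hrow : ∀ k, ∑ l, A k l * q l ≤ a * p k) (u : ι → R) :
    ∑ k, ∑ l, A k l * q l / p k * u k ^ 2 ≤ a * ∑ k, u k ^ 2 := by
  simp only [← sum_mul, ← sum_div, mul_sum]
  gcongr with k
  exact (div_le_iff₀ (hp k)).2 (hrow k)

theorem schur_test {A : ι → κ → R} {p : ι → R} {q : κ → R} {a b : R}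
    (hA : ∀ k l, 0 ≤ A k l) (hp : ∀ k, 0 < p k) (hq : ∀ l, 0 < q l)
    (hrow : ∀ k, ∑ l, A k l * q l ≤ a * p k) (hcol : ∀ l, ∑ k, A k l * p k ≤ b * q l)
    (u : ι → R) (v : κ → R) :
    (∑ k, ∑ l, u k * A k l * v l) ^ 2 ≤ (a * ∑ k, u k ^ 2) * (b * ∑ l, v l ^ 2) := by
  have row_nonneg (k l) : 0 ≤ A k l * q l / p k * u k ^ 2 :=
    mul_nonneg (div_nonneg (mul_nonneg (hA k l) (hq l).le) (hp k).le) (sq_nonneg _)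
  have col_nonneg (k l) : 0 ≤ A k l * p k / q l * v l ^ 2 :=
    mul_nonneg (div_nonneg (mul_nonneg (hA k l) (hp k).le) (hq l).le) (sq_nonneg _)
  have cauchy_schwarz : (∑ k, ∑ l, u k * A k l * v l) ^ 2 ≤
      (∑ k, ∑ l, A k l * q l / p k * u k ^ 2) * ∑ k, ∑ l, A k l * p k / q l * v l ^ 2 := by
    simp only [← Fintype.sum_prod_type']
    refine sum_sq_le_sum_mul_sum_of_sq_le_mul univ (fun x _ ↦ row_nonneg x.1 x.2)
      (fun x _ ↦ col_nonneg x.1 x.2) fun x _ ↦ le_of_eq ?_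
    have := (hp x.1).ne'
    have := (hq x.2).ne'
    field_simp
  have row_sum_le := sum_sum_mul_div_mul_sq_le hp hrow u
  have col_sum_le : ∑ k, ∑ l, A k l * p k / q l * v l ^ 2 ≤ b * ∑ l, v l ^ 2 := by
    rw [sum_comm]
    exact sum_sum_mul_div_mul_sq_le hq hcol v
  refine cauchy_schwarz.trans (mul_le_mul row_sum_le col_sum_le ?_ (le_trans ?_ row_sum_le))
  · exact sum_nonneg fun k _ ↦ sum_nonneg fun l _ ↦ col_nonneg k l
  · exact sum_nonneg fun k _ ↦ sum_nonneg fun l _ ↦ row_nonneg k l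

end SchurTest

section SqrtSums

variable {ι : Type*} [Fintype ι] {a : ι → ℝ}

theorem sum_sqrt_div_sum_sq (ha : ∀ i, 0 ≤ a i) (hsum : ∑ i, a i ≠ 0) :
    ∑ i, √(a i / ∑ j, a j) ^ 2 = 1 := by
  have hsq (i) : √(a i / ∑ j, a j) ^ 2 = a i / ∑ j, a j :=
    Real.sq_sqrt (div_nonneg (ha i) (sum_nonneg fun j _ ↦ ha j))
  simp only [hsq, ← sum_div, div_self hsum]

theorem sum_div_sqrt_sum_mul_mul_sqrt_div {b : ι → ℝ} (ha : 0 ≤ ∑ i, a i) (hb : ∀ i, 0 < b i)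
    (t : ℝ) : ∑ i, a i / √((∑ j, a j) * b i) * √(b i / t) = √((∑ i, a i) / t) := by
  have cancel (i) : a i / √((∑ j, a j) * b i) * √(b i / t) = a i / √(∑ j, a j) / √t := by
    have := Real.sqrt_pos.2 (hb i)
    rw [Real.sqrt_mul ha, Real.sqrt_div (hb i).le]
    field_simp
  simp only [cancel, ← sum_div, Real.div_sqrt, Real.sqrt_div ha]

end SqrtSums

section NormalizedMatrix

variable {m n : ℕ} {c : Fin m → Fin n → ℝ}

theorem Dmat_nonneg (hc : ∀ k l, 0 ≤ c k l) (k : Fin m) (l : Fin n) : 0 ≤ Dmat c k l :=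
  div_nonneg (hc k l) (Real.sqrt_nonneg _)

theorem uStar_pos (hrow : ∀ k, 0 < ∑ l, c k l) (k : Fin m) : 0 < uStar c k :=
  Real.sqrt_pos.2 (div_pos (hrow k) (sum_pos (fun i _ ↦ hrow i) ⟨k, mem_univ k⟩))

theorem vStar_pos (hcol : ∀ l, 0 < ∑ k, c k l) (l : Fin n) : 0 < vStar c l := by
  rw [vStar, sum_comm (f := c)]
  exact Real.sqrt_pos.2 (div_pos (hcol l) (sum_pos (fun j _ ↦ hcol j) ⟨l, mem_univ l⟩))

theorem sum_uStar_sq (hrow : ∀ k, 0 ≤ ∑ l, c k l) (hsum : ∑ k, ∑ l, c k l ≠ 0) :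
    ∑ k, uStar c k ^ 2 = 1 :=
  sum_sqrt_div_sum_sq hrow hsum

theorem sum_vStar_sq (hcol : ∀ l, 0 ≤ ∑ k, c k l) (hsum : ∑ k, ∑ l, c k l ≠ 0) :
    ∑ l, vStar c l ^ 2 = 1 := by
  simp only [vStar, sum_comm (f := c)]
  exact sum_sqrt_div_sum_sq hcol (sum_comm (f := c) ▸ hsum)

theorem sum_Dmat_mul_vStar (hrow : ∀ k, 0 ≤ ∑ l, c k l) (hcol : ∀ l, 0 < ∑ k, c k l)
    (k : Fin m) : ∑ l, Dmat c k l * vStar c l = uStar c k :=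
  sum_div_sqrt_sum_mul_mul_sqrt_div (hrow k) hcol _

theorem sum_Dmat_mul_uStar (hrow : ∀ k, 0 < ∑ l, c k l) (hcol : ∀ l, 0 ≤ ∑ k, c k l)
    (l : Fin n) : ∑ k, Dmat c k l * uStar c k = vStar c l := by
  simp only [Dmat, mul_comm _ (∑ k, c k l)]
  exact sum_div_sqrt_sum_mul_mul_sqrt_div (hcol l) hrow _

theorem sum_mul_Dmat_mul_le_sqrt_mul_sqrt (hc : ∀ k l, 0 ≤ c k l) (hrow : ∀ k, 0 < ∑ l, c k l)
    (hcol : ∀ l, 0 < ∑ k, c k l) (u : Fin m → ℝ) (v : Fin n → ℝ) :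
    ∑ k, ∑ l, u k * Dmat c k l * v l ≤ √(∑ k, u k ^ 2) * √(∑ l, v l ^ 2) := by
  rw [← Real.sqrt_mul (sum_nonneg fun k _ ↦ sq_nonneg (u k))]
  apply Real.le_sqrt_of_sq_le
  simpa only [one_mul] using
    schur_test (a := 1) (b := 1) (Dmat_nonneg hc) (uStar_pos hrow) (vStar_pos hcol)
      (fun k ↦ by rw [sum_Dmat_mul_vStar (fun i ↦ (hrow i).le) hcol, one_mul])
      (fun l ↦ by rw [sum_Dmat_mul_uStar hrow fun j ↦ (hcol j).le, one_mul]) u v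

theorem sum_uStar_mul_Dmat_mul_vStar (hrow : ∀ k, 0 ≤ ∑ l, c k l) (hcol : ∀ l, 0 < ∑ k, c k l)
    (hsum : ∑ k, ∑ l, c k l ≠ 0) : ∑ k, ∑ l, uStar c k * Dmat c k l * vStar c l = 1 := by
  simp only [mul_assoc, ← mul_sum, sum_Dmat_mul_vStar hrow hcol, ← sq, sum_uStar_sq hrow hsum]

end NormalizedMatrix

theorem largest_singular_value_one_general {m n : ℕ} (hm : 1 ≤ m) {c : Fin m → Fin n → ℝ}
    (hc : ∀ k l, 0 ≤ c k l) (hrow : ∀ k, 0 < ∑ l, c k l) (hcol : ∀ l, 0 < ∑ k, c k l) :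
    (∀ (u : Fin m → ℝ) (v : Fin n → ℝ),
      ∑ k, ∑ l, u k * Dmat c k l * v l ≤ √(∑ k, u k ^ 2) * √(∑ l, v l ^ 2)) ∧
    (∑ k, uStar c k ^ 2 = 1) ∧
    (∑ l, vStar c l ^ 2 = 1) ∧
    (∑ k, ∑ l, uStar c k * Dmat c k l * vStar c l = 1) ∧
    (∀ k, ∑ l, Dmat c k l * (∑ k', Dmat c k' l * uStar c k') = uStar c k) := by
  have hrow' (k) : 0 ≤ ∑ l, c k l := (hrow k).le
  have hcol' (l) : 0 ≤ ∑ k, c k l := (hcol l).le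
  have hsum : ∑ k, ∑ l, c k l ≠ 0 := (sum_pos (fun k _ ↦ hrow k) ⟨⟨0, hm⟩, mem_univ _⟩).ne'
  refine ⟨sum_mul_Dmat_mul_le_sqrt_mul_sqrt hc hrow hcol, sum_uStar_sq hrow' hsum,
    sum_vStar_sq hcol' hsum, sum_uStar_mul_Dmat_mul_vStar hrow' hcol hsum, fun k ↦ ?_⟩
  simp only [sum_Dmat_mul_uStar hrow hcol', sum_Dmat_mul_vStar hrow' hcol]

/-- The largest singular value of `D = G^{-1/2} c H^{-1/2}` equals `1`:
`uᵀ D v ≤ ‖u‖ ‖v‖` for all `u, v`, with equality at the unit vectors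
`u_k = √(c_{k+}/c_{++})`, `v_l = √(c_{+l}/c_{++})`; in particular `D Dᵀ u = u`
for this `u`. -/
theorem largest_singular_value_one (m n : ℕ) (hm : 1 ≤ m) (hn : 1 ≤ n)
    (c : Fin m → Fin n → ℝ) (hc : ∀ k l, 0 < c k l) :
    (∀ (u : Fin m → ℝ) (v : Fin n → ℝ),
      ∑ k : Fin m, ∑ l : Fin n, u k * Dmat c k l * v l
        ≤ Real.sqrt (∑ k : Fin m, u k ^ 2) * Real.sqrt (∑ l : Fin n, v l ^ 2)) ∧
    (∑ k : Fin m, uStar c k ^ 2 = 1) ∧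
    (∑ l : Fin n, vStar c l ^ 2 = 1) ∧
    (∑ k : Fin m, ∑ l : Fin n, uStar c k * Dmat c k l * vStar c l = 1) ∧
    (∀ k, ∑ l : Fin n, Dmat c k l * (∑ k' : Fin m, Dmat c k' l * uStar c k')
        = uStar c k) :=
  largest_singular_value_one_general hm (fun k l ↦ (hc k l).le)
    (fun k ↦ sum_pos (fun l _ ↦ hc k l) ⟨⟨0, hn⟩, mem_univ _⟩)
    (fun l ↦ sum_pos (fun k _ ↦ hc k l) ⟨⟨0, hm⟩, mem_univ _⟩)
end

section
/- Let c = (c_{k,l}) be an m × n real matrix with all entries strictly positive, and define D_{k,l} = c_{k,l}/√(c_{k+} c_{+l}) where c_{k+} = ∑_l c_{k,l} and c_{+l} = ∑_k c_{k,l}. Then the symmetric positive semidefinite matrix D Dᵀ has all its eigenvalues in the interval [0,1], the value 1 is an eigenvalue, and the eigenvalue 1 has multiplicity one (its eigenspace is the one-dimensional span of the vector (√(c_{1+}),…,√(c_{m+}))ᵀ). -/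
open Finset

/-- The symmetric matrix `D Dᵀ`. -/
noncomputable def DDt {m n : ℕ} (c : Fin m → Fin n → ℝ) (k k' : Fin m) : ℝ :=
  ∑ l : Fin n, Dmat c k l * Dmat c k' l

/-!
Expanding the square gives, for all vectors `x` and `y`,
`∑ c_{k,l} (x_k / √c_{k+} - y_l / √c_{+l})² = ‖x‖² + ‖y‖² - 2 ⟨Dᵀ x, y⟩`.
At `y = Dᵀ x` the right-hand side is `‖x‖² - ‖Dᵀ x‖²`. As the entries of `c` are nonnegative, `Dᵀ`
is a contraction, and `‖Dᵀ x‖ = ‖x‖` forces `x_k / √c_{k+}` to agree on any two rows that are both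
nonzero in some common column. An eigenvector of `D Dᵀ` with eigenvalue `t` satisfies
`t ‖x‖² = ‖Dᵀ x‖²`.
-/

open Matrix Relation

theorem mul_dotProduct_self_of_mul_transpose_mulVec_eq_smul {ι κ R : Type*} [Fintype ι] [Fintype κ]
    [CommSemiring R] {A : Matrix ι κ R} {t : R} {x : ι → R}
    (h : (A * Aᵀ) *ᵥ x = t • x) : t * (x ⬝ᵥ x) = (x ᵥ* A) ⬝ᵥ (x ᵥ* A) := by
  rw [← smul_eq_mul, ← dotProduct_smul, ← h, ← mulVec_mulVec, dotProduct_mulVec, mulVec_transpose]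

theorem sum_mul_sq_div_sqrt_sum {ι : Type*} [Fintype ι] {f : ι → ℝ} (hf : 0 < ∑ i, f i) (a : ℝ) :
    ∑ i, f i * (a / √(∑ j, f j)) ^ 2 = a * a := by
  rw [← sum_mul, div_pow, Real.sq_sqrt hf.le, mul_div_cancel₀ _ hf.ne', sq]

section NormalizedMatrix

variable {m n : ℕ} {c : Fin m → Fin n → ℝ}

theorem DDt_eq_mul_transpose (c : Fin m → Fin n → ℝ) :
    of (DDt c) = of (Dmat c) * (of (Dmat c))ᵀ :=
  rfl

theorem Dmat_swap (c : Fin m → Fin n → ℝ) :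
    of (Dmat fun l k ↦ c k l) = (of (Dmat c))ᵀ := by
  ext l k
  simp only [of_apply, transpose_apply, Dmat, mul_comm]

theorem Dmat_eq_div_sqrt_mul_sqrt {k : Fin m} (hr : 0 ≤ ∑ l, c k l) (l : Fin n) :
    Dmat c k l = c k l / (√(∑ l', c k l') * √(∑ k', c k' l)) := by
  rw [Dmat, Real.sqrt_mul hr]

theorem sqrt_rowSum_vecMul_Dmat (hr : ∀ k, 0 < ∑ l, c k l) :
    (fun k ↦ √(∑ l, c k l)) ᵥ* of (Dmat c) = fun l ↦ √(∑ k, c k l) := by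
  ext l
  have cancel (k : Fin m) : √(∑ l', c k l') * Dmat c k l = c k l / √(∑ k', c k' l) := by
    rw [Dmat_eq_div_sqrt_mul_sqrt (hr k).le, ← mul_div_assoc,
      mul_div_mul_left _ _ (Real.sqrt_pos.2 (hr k)).ne']
  simp only [vecMul, dotProduct, of_apply, cancel, ← sum_div, Real.div_sqrt]

theorem Dmat_mulVec_sqrt_colSum (hs : ∀ l, 0 < ∑ k, c k l) :
    of (Dmat c) *ᵥ (fun l ↦ √(∑ k, c k l)) = fun k ↦ √(∑ l, c k l) := by
  rw [← vecMul_transpose, ← Dmat_swap, sqrt_rowSum_vecMul_Dmat hs]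

theorem DDt_mulVec_sqrt_rowSum (hr : ∀ k, 0 < ∑ l, c k l) (hs : ∀ l, 0 < ∑ k, c k l) :
    of (DDt c) *ᵥ (fun k ↦ √(∑ l, c k l)) = fun k ↦ √(∑ l, c k l) := by
  rw [DDt_eq_mul_transpose, ← mulVec_mulVec, mulVec_transpose, sqrt_rowSum_vecMul_Dmat hr,
    Dmat_mulVec_sqrt_colSum hs]

theorem sum_mul_sq_div_sqrt_sub_div_sqrt (hr : ∀ k, 0 < ∑ l, c k l) (hs : ∀ l, 0 < ∑ k, c k l)
    (x : Fin m → ℝ) (y : Fin n → ℝ) :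
    ∑ k, ∑ l, c k l * (x k / √(∑ l', c k l') - y l / √(∑ k', c k' l)) ^ 2 =
      x ⬝ᵥ x + y ⬝ᵥ y - 2 * ((x ᵥ* of (Dmat c)) ⬝ᵥ y) := by
  have expand (k : Fin m) (l : Fin n) :
      c k l * (x k / √(∑ l', c k l') - y l / √(∑ k', c k' l)) ^ 2 =
        c k l * (x k / √(∑ l', c k l')) ^ 2 + c k l * (y l / √(∑ k', c k' l)) ^ 2 -
          2 * (x k * Dmat c k l * y l) := by
    rw [Dmat_eq_div_sqrt_mul_sqrt (hr k).le]
    ring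
  have rows : ∑ k, ∑ l, c k l * (x k / √(∑ l', c k l')) ^ 2 = x ⬝ᵥ x := by
    simp only [sum_mul_sq_div_sqrt_sum (hr _), dotProduct]
  have cols : ∑ k, ∑ l, c k l * (y l / √(∑ k', c k' l)) ^ 2 = y ⬝ᵥ y := by
    rw [sum_comm]
    simp only [sum_mul_sq_div_sqrt_sum (hs _), dotProduct]
  have cross : ∑ k, ∑ l, x k * Dmat c k l * y l = (x ᵥ* of (Dmat c)) ⬝ᵥ y := by
    rw [sum_comm]
    simp only [vecMul, dotProduct, of_apply, sum_mul]
  simp only [expand, sum_sub_distrib, sum_add_distrib, ← mul_sum, rows, cols, cross]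

theorem sum_mul_sq_div_sqrt_sub_vecMul_Dmat (hr : ∀ k, 0 < ∑ l, c k l)
    (hs : ∀ l, 0 < ∑ k, c k l) (x : Fin m → ℝ) :
    ∑ k, ∑ l, c k l * (x k / √(∑ l', c k l') - (x ᵥ* of (Dmat c)) l / √(∑ k', c k' l)) ^ 2 =
      x ⬝ᵥ x - (x ᵥ* of (Dmat c)) ⬝ᵥ (x ᵥ* of (Dmat c)) := by
  rw [sum_mul_sq_div_sqrt_sub_div_sqrt hr hs]
  ring

theorem vecMul_Dmat_dotProduct_self_le (hc : ∀ k l, 0 ≤ c k l) (hr : ∀ k, 0 < ∑ l, c k l)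
    (hs : ∀ l, 0 < ∑ k, c k l) (x : Fin m → ℝ) :
    (x ᵥ* of (Dmat c)) ⬝ᵥ (x ᵥ* of (Dmat c)) ≤ x ⬝ᵥ x := by
  rw [← sub_nonneg, ← sum_mul_sq_div_sqrt_sub_vecMul_Dmat hr hs]
  exact sum_nonneg fun k _ ↦ sum_nonneg fun l _ ↦ mul_nonneg (hc k l) (sq_nonneg _)

theorem div_sqrt_eq_vecMul_Dmat_div_sqrt (hc : ∀ k l, 0 ≤ c k l) (hr : ∀ k, 0 < ∑ l, c k l)
    (hs : ∀ l, 0 < ∑ k, c k l) {x : Fin m → ℝ}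
    (hx : (x ᵥ* of (Dmat c)) ⬝ᵥ (x ᵥ* of (Dmat c)) = x ⬝ᵥ x) {k : Fin m} {l : Fin n}
    (hkl : c k l ≠ 0) :
    x k / √(∑ l', c k l') = (x ᵥ* of (Dmat c)) l / √(∑ k', c k' l) := by
  have nonneg (i : Fin m) (j : Fin n) :
      0 ≤ c i j * (x i / √(∑ l', c i l') - (x ᵥ* of (Dmat c)) j / √(∑ k', c k' j)) ^ 2 :=
    mul_nonneg (hc i j) (sq_nonneg _)
  have total := sum_mul_sq_div_sqrt_sub_vecMul_Dmat hr hs x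
  rw [hx, sub_self, sum_eq_zero_iff_of_nonneg fun i _ ↦ sum_nonneg fun j _ ↦ nonneg i j] at total
  have row := total k (mem_univ k)
  rw [sum_eq_zero_iff_of_nonneg fun j _ ↦ nonneg k j] at row
  have entry := (mul_eq_zero.1 (row l (mem_univ l))).resolve_left hkl
  exact sub_eq_zero.1 (sq_eq_zero_iff.1 entry)

theorem mem_Icc_of_DDt_mulVec_eq_smul (hc : ∀ k l, 0 ≤ c k l) (hr : ∀ k, 0 < ∑ l, c k l)
    (hs : ∀ l, 0 < ∑ k, c k l) {t : ℝ} {x : Fin m → ℝ} (hx : x ≠ 0)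
    (h : of (DDt c) *ᵥ x = t • x) : t ∈ Set.Icc 0 1 := by
  have quad : t * (x ⬝ᵥ x) = (x ᵥ* of (Dmat c)) ⬝ᵥ (x ᵥ* of (Dmat c)) :=
    mul_dotProduct_self_of_mul_transpose_mulVec_eq_smul h
  have pos : 0 < x ⬝ᵥ x := dotProduct_self_star_pos_iff.2 hx
  constructor
  · refine nonneg_of_mul_nonneg_left ?_ pos
    rw [quad]
    exact dotProduct_self_star_nonneg _
  · rw [← mul_le_iff_le_one_left pos, quad]
    exact vecMul_Dmat_dotProduct_self_le hc hr hs x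

/-- Adjacency of rows of `c`: both are nonzero in a common column. Chains of adjacent rows are the
paths of the bipartite graph of rows and columns whose edges are the nonzero entries of `c`. -/
def RowAdj (c : Fin m → Fin n → ℝ) (k k' : Fin m) : Prop :=
  ∃ l, c k l ≠ 0 ∧ c k' l ≠ 0

theorem exists_eq_mul_sqrt_rowSum_of_DDt_mulVec_eq_self (hc : ∀ k l, 0 ≤ c k l)
    (hr : ∀ k, 0 < ∑ l, c k l) (hs : ∀ l, 0 < ∑ k, c k l)
    (hconn : ∀ k k', ReflTransGen (RowAdj c) k k') {x : Fin m → ℝ} (h : of (DDt c) *ᵥ x = x) :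
    ∃ a : ℝ, ∀ k, x k = a * √(∑ l, c k l) := by
  have norm_eq : (x ᵥ* of (Dmat c)) ⬝ᵥ (x ᵥ* of (Dmat c)) = x ⬝ᵥ x := by
    rw [← mul_dotProduct_self_of_mul_transpose_mulVec_eq_smul (h.trans (one_smul ℝ x).symm),
      one_mul]
  have ratio_eq_of_adj {k k' : Fin m} :
      RowAdj c k k' → x k / √(∑ l, c k l) = x k' / √(∑ l, c k' l) := fun ⟨_, hk, hk'⟩ ↦
    (div_sqrt_eq_vecMul_Dmat_div_sqrt hc hr hs norm_eq hk).trans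
      (div_sqrt_eq_vecMul_Dmat_div_sqrt hc hr hs norm_eq hk').symm
  have ratio_eq (k k' : Fin m) : x k / √(∑ l, c k l) = x k' / √(∑ l, c k' l) := by
    induction hconn k k' with
    | refl => rfl
    | tail _ hadj ih => exact ih.trans (ratio_eq_of_adj hadj)
  obtain _ | ⟨⟨k₀⟩⟩ := isEmpty_or_nonempty (Fin m)
  · exact ⟨0, isEmptyElim⟩
  · exact ⟨x k₀ / √(∑ l, c k₀ l), fun k ↦
      (div_eq_iff (Real.sqrt_pos.2 (hr k)).ne').1 (ratio_eq k k₀)⟩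

theorem DDt_eigenvalues_general (hc : ∀ k l, 0 ≤ c k l) (hr : ∀ k, 0 < ∑ l, c k l)
    (hs : ∀ l, 0 < ∑ k, c k l)
    (hconn : ∀ k k', ReflTransGen (RowAdj c) k k') :
    (∀ (t : ℝ) (x : Fin m → ℝ), x ≠ 0 →
      (∀ k, ∑ k', DDt c k k' * x k' = t * x k) → 0 ≤ t ∧ t ≤ 1) ∧
    (∀ k, ∑ k', DDt c k k' * √(∑ l, c k' l) = √(∑ l, c k l)) ∧
    (∀ x : Fin m → ℝ, (∀ k, ∑ k', DDt c k k' * x k' = x k) →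
      ∃ a : ℝ, ∀ k, x k = a * √(∑ l, c k l)) :=
  ⟨fun _ _ hx h ↦ mem_Icc_of_DDt_mulVec_eq_smul hc hr hs hx (funext h),
    congrFun (DDt_mulVec_sqrt_rowSum hr hs),
    fun _ h ↦ exists_eq_mul_sqrt_rowSum_of_DDt_mulVec_eq_self hc hr hs hconn (funext h)⟩

end NormalizedMatrix

/-- All eigenvalues of `D Dᵀ` lie in `[0,1]`, `1` is an eigenvalue, and the eigenspace of
the eigenvalue `1` is the one-dimensional span of `(√(c_{1+}),…,√(c_{m+}))ᵀ`. -/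
theorem DDt_eigenvalues (m n : ℕ) (hm : 1 ≤ m) (hn : 1 ≤ n)
    (c : Fin m → Fin n → ℝ) (hc : ∀ k l, 0 < c k l) :
    (∀ (t : ℝ) (x : Fin m → ℝ), x ≠ 0 →
      (∀ k, ∑ k' : Fin m, DDt c k k' * x k' = t * x k) → 0 ≤ t ∧ t ≤ 1) ∧
    (∀ k, ∑ k' : Fin m, DDt c k k' * Real.sqrt (∑ l : Fin n, c k' l)
        = Real.sqrt (∑ l : Fin n, c k l)) ∧
    (∀ x : Fin m → ℝ, (∀ k, ∑ k' : Fin m, DDt c k k' * x k' = x k) →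
      ∃ a : ℝ, ∀ k, x k = a * Real.sqrt (∑ l : Fin n, c k l)) :=
  DDt_eigenvalues_general (fun k l ↦ (hc k l).le)
    (fun k ↦ sum_pos (fun l _ ↦ hc k l) ⟨⟨0, hn⟩, mem_univ _⟩)
    (fun l ↦ sum_pos (fun k _ ↦ hc k l) ⟨⟨0, hm⟩, mem_univ _⟩)
    fun k k' ↦ .single ⟨⟨0, hn⟩, (hc k _).ne', (hc k' _).ne'⟩
end
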